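/- Let X be a complex Banach space and let T, C be bounded linear operators on X with C invertible (with bounded inverse). If T is norm-unimodal, then C⁻¹TC is also norm-unimodal. -/

import Mathlib

open Filter Topology MeasureTheory
open scoped Classical ENNReal

noncomputable def distFreq {X : Type*} [MetricSpace X] (f : X → X) (x y : X) (τ : ℝ) (n : ℕ) : ℝ :=
  (((Finset.range n).filter fun i => dist (f^[i] x) (f^[i] y) < τ).card : ℝ) / n

def DistributionallyChaoticPair {X : Type*} [MetricSpace X] (f : X → X) (x y : X) : Prop :=
  (∀ τ : ℝ, 0 < τ → Filter.limsup (distFreq f x y τ) Filter.atTop = 1) ∧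
  (∃ ε : ℝ, 0 < ε ∧ Filter.liminf (distFreq f x y ε) Filter.atTop = 0)

def DistributionallyChaotic {X : Type*} [MetricSpace X] (f : X → X) : Prop :=
  ∃ Λ : Set X, ¬Λ.Countable ∧
    ∀ x ∈ Λ, ∀ y ∈ Λ, x ≠ y → DistributionallyChaoticPair f x y

def LiYorkePair {X : Type*} [MetricSpace X] (f : X → X) (x y : X) : Prop :=
  0 < Filter.limsup (fun n => edist (f^[n] x) (f^[n] y)) Filter.atTop ∧
  Filter.liminf (fun n => edist (f^[n] x) (f^[n] y)) Filter.atTop = 0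

def LiYorkeChaotic {X : Type*} [MetricSpace X] (f : X → X) : Prop :=
  ∃ Γ : Set X, ¬Γ.Countable ∧ ∀ x ∈ Γ, ∀ y ∈ Γ, x ≠ y → LiYorkePair f x y

def NormUnimodal {X : Type*} [NormedAddCommGroup X] [NormedSpace ℂ X] (T : X →L[ℂ] X) : Prop :=
  ∃ r : ℝ, 1 < r ∧ ∀ m : ℕ, ∃ x : X, x ≠ 0 ∧
    Filter.Tendsto (fun k => ‖(T ^ k) x‖) Filter.atTop (nhds 0) ∧
    ∀ i : ℕ, 1 ≤ i → i ≤ m → r ^ i * ‖x‖ ≤ ‖(T ^ i) x‖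

/-!
A similarity, or more generally an antilipschitz intertwining operator `A`, preserves exponential
growth `r ^ i` of an orbit up to a constant factor `K`. The factor is absorbed by lowering the rate
to some `s` with `1 < s < r` and restarting the orbit at a time `j` minimising `‖T ^ j x‖ / s ^ j`:
from there on the growth rate is at least `s`. This `j` is bounded independently of how long the
growth lasts, because `(r / s) ^ j` eventually exceeds `K`.
-/

theorem exists_le_forall_le_add_of_lt {α : Type*} [LinearOrder α] {b : ℕ → α} {n m : ℕ}
    (hb : ∀ i, n ≤ i → i ≤ n + m → b 0 < b i) :
    ∃ j ≤ n, ∀ i ≤ m, b j ≤ b (j + i) := by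
  obtain ⟨j, hj, hmin⟩ :=
    Finset.exists_min_image (Finset.range (n + m + 1)) b ⟨0, by simp⟩
  simp only [Finset.mem_range, Nat.lt_succ_iff] at hj hmin
  have hjn : j ≤ n := by
    by_contra! hnj
    exact (hb j hnj.le hj).not_ge (hmin 0 (Nat.zero_le _))
  exact ⟨j, hjn, fun i hi => hmin (j + i) (by omega)⟩

theorem exists_forall_exists_le_pow_mul_le_add {r s : ℝ} (hs : 0 < s) (hsr : s < r) (K : ℝ) :
    ∃ n : ℕ, ∀ (m : ℕ) (a : ℕ → ℝ), 0 < a 0 → (∀ i ≤ n + m, r ^ i * a 0 ≤ K * a i) →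
      ∃ j ≤ n, ∀ i ≤ m, s ^ i * a j ≤ a (j + i) := by
  have hrs : 1 < r / s := (one_lt_div hs).2 hsr
  obtain ⟨n, hn⟩ := pow_unbounded_of_one_lt K hrs
  refine ⟨n, fun m a ha hgrowth => ?_⟩
  have hK : 0 ≤ K := by
    have : a 0 ≤ K * a 0 := by simpa using hgrowth 0 (Nat.zero_le _)
    exact (pos_of_mul_pos_left (ha.trans_le this) ha.le).le
  have hlate : ∀ i, n ≤ i → i ≤ n + m → a 0 / s ^ 0 < a i / s ^ i := by
    intro i hni hi
    have hKi : K * s ^ i < r ^ i := by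
      have : K < (r / s) ^ i := hn.trans_le (pow_le_pow_right₀ hrs.le hni)
      rwa [div_pow, lt_div_iff₀ (by positivity)] at this
    have hKa : K * (a 0 * s ^ i) < K * a i := calc
      K * (a 0 * s ^ i) = K * s ^ i * a 0 := by ring
      _ < r ^ i * a 0 := by gcongr
      _ ≤ K * a i := hgrowth i hi
    rw [pow_zero, div_one, lt_div_iff₀ (by positivity)]
    exact lt_of_mul_lt_mul_left hKa hK
  obtain ⟨j, hjn, hmin⟩ :=
    exists_le_forall_le_add_of_lt (b := fun i => a i / s ^ i) hlate
  refine ⟨j, hjn, fun i hi => ?_⟩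
  calc s ^ i * a j = a j / s ^ j * s ^ (j + i) := by rw [pow_add]; field_simp
    _ ≤ a (j + i) := (le_div_iff₀ (by positivity)).1 (hmin i hi)

theorem NormUnimodal.of_pow_mul_norm_le {X : Type*} [NormedAddCommGroup X] [NormedSpace ℂ X]
    {T : X →L[ℂ] X} {r : ℝ} (hr : 1 < r) (K : ℝ)
    (hT : ∀ m : ℕ, ∃ x : X, x ≠ 0 ∧ Tendsto (fun k => ‖(T ^ k) x‖) atTop (𝓝 0) ∧
      ∀ i ≤ m, r ^ i * ‖x‖ ≤ K * ‖(T ^ i) x‖) :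
    NormUnimodal T := by
  obtain ⟨s, hs, hsr⟩ := exists_between hr
  obtain ⟨n, hn⟩ := exists_forall_exists_le_pow_mul_le_add (zero_lt_one.trans hs) hsr K
  refine ⟨s, hs, fun m => ?_⟩
  obtain ⟨x, hx, hlim, hgrowth⟩ := hT (n + m)
  obtain ⟨j, hjn, hj⟩ :=
    hn m (fun i => ‖(T ^ i) x‖) (by simpa using hx) (by simpa using hgrowth)
  have pow_add_apply (k : ℕ) : (T ^ k) ((T ^ j) x) = (T ^ (j + k)) x := by
    rw [add_comm, pow_add, mul_apply_eq_comp]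
  refine ⟨(T ^ j) x, fun hzero => ?_, ?_, fun i _ hi => ?_⟩
  · have hpos : 0 < r ^ j * ‖x‖ := by positivity
    exact hpos.not_ge (by simpa [hzero] using hgrowth j (by omega))
  · simpa only [pow_add_apply, add_comm j] using (tendsto_add_atTop_iff_nat j).2 hlim
  · simpa only [pow_add_apply] using hj i hi

theorem stmt_2_general {X Y : Type*} [NormedAddCommGroup X] [NormedSpace ℂ X]
    [NormedAddCommGroup Y] [NormedSpace ℂ Y]
    {T : X →L[ℂ] X} {S : Y →L[ℂ] Y} {A : X →L[ℂ] Y} {K : NNReal}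
    (hA : AntilipschitzWith K A) (hAT : Function.Semiconj A T S) (hT : NormUnimodal T) :
    NormUnimodal S := by
  obtain ⟨r, hr, hT⟩ := hT
  have semiconj_pow (i : ℕ) (x : X) : (S ^ i) (A x) = A ((T ^ i) x) := by
    simpa only [FunLike.coe_pow_eq_iterate] using (hAT.iterate_right i x).symm
  refine .of_pow_mul_norm_le hr (‖A‖ * K) fun m => ?_
  obtain ⟨x, hx, hlim, hgrowth⟩ := hT m
  refine ⟨A x, (map_ne_zero_iff A hA.injective).2 hx, ?_, fun i hi => ?_⟩
  · simp only [semiconj_pow]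
    rw [← tendsto_zero_iff_norm_tendsto_zero] at hlim ⊢
    simpa only [Function.comp_def, map_zero] using (A.continuous.tendsto 0).comp hlim
  · have hgrowth_i : r ^ i * ‖x‖ ≤ ‖(T ^ i) x‖ := by
      rcases Nat.eq_zero_or_pos i with rfl | hpos
      · simp
      · exact hgrowth i hpos hi
    calc r ^ i * ‖A x‖ ≤ r ^ i * (‖A‖ * ‖x‖) := by gcongr; exact A.le_opNorm x
      _ = ‖A‖ * (r ^ i * ‖x‖) := by ring
      _ ≤ ‖A‖ * (K * ‖A ((T ^ i) x)‖) := by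
        gcongr ‖A‖ * ?_
        exact hgrowth_i.trans (ZeroHomClass.bound_of_antilipschitz A hA _)
      _ = ‖A‖ * K * ‖(S ^ i) (A x)‖ := by rw [semiconj_pow, mul_assoc]

/-- Norm-unimodality is invariant under similarity. -/
theorem stmt_2 {X : Type*} [NormedAddCommGroup X] [NormedSpace ℂ X] [CompleteSpace X]
    (T : X →L[ℂ] X) (C : (X →L[ℂ] X)ˣ) (hT : NormUnimodal T) :
    NormUnimodal ((↑C⁻¹ : X →L[ℂ] X) * T * (↑C : X →L[ℂ] X)) := by
  set A : X →L[ℂ] X := ↑C⁻¹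
  have intertwines : A * T = A * T * ↑C * A := (Units.mul_inv_cancel_right (A * T) C).symm
  have antilipschitz : AntilipschitzWith ‖(↑C : X →L[ℂ] X)‖₊ A :=
    (ContinuousLinearEquiv.ofUnit C⁻¹).antilipschitz
  exact stmt_2_general antilipschitz (DFunLike.congr_fun intertwines) hT
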